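/- Let d ≥ 3. There exists a measure γ ∈ P_{W_d} which is singular with respect to Lebesgue measure on [0,∞), has no atoms, and whose topological support equals [0,∞). For any such γ, the generator ψ = W_d γ is strict, and the measure μ_C associated with the copula C = C_ψ has the following properties: (1) μ_C is singular with respect to Lebesgue measure λ_d on [0,1]^d and the topological support of μ_C equals [0,1]^d; (2) μ_C(L_t) = 0 for every t ∈ [0,1], where L_t := {x ∈ [0,1]^d : C_ψ(x) = t}; (3) the Kendall distribution function F_K^d(t) := μ_C({x ∈ [0,1]^d : C_ψ(x) ≤ t}) is continuous and strictly increasing on [0,1] and singular, i.e. its derivative is 0 at Lebesgue-almost every t ∈ [0,1]. -/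

import Mathlib

/-!
The copula measure is identified with the law of an explicit random vector. Let `T ∼ γ` and let
`S = (S₁, …, S_d)` be independent of `T` and uniform on the unit simplex of `ℝᵈ`. The part of the
simplex lying above `s` is a translate of the simplex scaled by `1 - ∑ sᵢ`, so
`P(S ≥ s) = (1 - ∑ sᵢ)₊^(d-1)` (`simplexMeasure_survival`). Conditioning on `T` shows that
`X = (ψ(S₁/T), …, ψ(S_d/T))` with `ψ = W_d γ` has distribution function `C_ψ` on `[0,1]^d`
(`mixVec_box`), and values on boxes determine the measure (`ext_of_unit_boxes`), so `μ_C` is the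
law of `X`.

Almost surely `φ(X₁) + ⋯ + φ(X_d) = 1/T`, hence `C_ψ(X) = ψ(1/T)` (`copula_law`). The Kendall
distribution function is therefore the distribution function of `ψ(1/T)`, and `μ_C(L_t)` is the
mass this law gives to `t`. The generator is locally Lipschitz on `(0,∞)`, so it maps Lebesgue-null
sets to null sets (`volume_image_williamson`): the law of `ψ(1/T)` inherits singularity from `γ`,
and inherits the absence of atoms and the full support by strict monotonicity and continuity of
`ψ`. Lebesgue's differentiation theorem then gives derivative zero almost everywhere
(`cdf_properties`). For the singularity of `μ_C`, if `1/T` lies almost surely in a null set `M`,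
then `X` lies almost surely in `{φ(x₁) + ⋯ + φ(x_d) ∈ M}`, whose sections parallel to the first
axis are `ψ`-images of translates of `M`, up to one point, and so are null (`volume_levelUnion`).
Full support holds because `(t, s) ↦ (ψ(sᵢ/t))ᵢ` is continuous and reaches every point of `(0,1)^d`
from the interior of the support of `(T, S)` (`mixVec_pos`).

An admissible `γ` comes from the Liouville numbers, a Lebesgue-null residual set, which meet each
interval in an uncountable Borel set and therefore carry an atomless probability there
(`exists_atomless_singular_Ioo`). A countable combination over rational intervals has full support,
and rescaling it by the point where its Williamson transform equals `1/2` normalizes it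
(`exists_memPW`).
-/

open MeasureTheory Set Filter Topology
open scoped ENNReal NNReal Classical

noncomputable section

/-- Extension of a generator `ψ` to `[0,∞]` with the convention `ψ(∞) := 0`. -/
def psiExt (ψ : ℝ → ℝ) (z : ℝ≥0∞) : ℝ := if z = ∞ then 0 else ψ z.toReal

/-- The pseudo-inverse `φ(y) = inf {z ∈ [0,∞] : ψ(z) = y}` of a generator. -/
def pseudoInv (ψ : ℝ → ℝ) (y : ℝ) : ℝ≥0∞ := sInf {z : ℝ≥0∞ | psiExt ψ z = y}

/-- An Archimedean generator: `ψ : [0,∞) → [0,1]` is continuous, non-increasing,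
satisfies `ψ 0 = 1` and `ψ(z) → 0` as `z → ∞`, and is strictly decreasing on
`[0, inf {z ∈ [0,∞] : ψ z = 0}]`. -/
structure IsGenerator (ψ : ℝ → ℝ) : Prop where
  continuousOn : ContinuousOn ψ (Ici 0)
  mem_Icc : ∀ z : ℝ, 0 ≤ z → ψ z ∈ Icc (0 : ℝ) 1
  map_zero : ψ 0 = 1
  tendsto_atTop : Tendsto ψ atTop (𝓝 0)
  antitoneOn : AntitoneOn ψ (Ici 0)
  strictAnti : ∀ ⦃x y : ℝ⦄, 0 ≤ x → x < y → ENNReal.ofReal y ≤ pseudoInv ψ 0 → ψ y < ψ x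

/-- The left-hand derivative `D⁻f`. -/
def leftDeriv (f : ℝ → ℝ) (z : ℝ) : ℝ := derivWithin f (Iio z) z

/-- The right-hand derivative `D⁺f`. -/
def rightDeriv (f : ℝ → ℝ) (z : ℝ) : ℝ := derivWithin f (Ioi z) z

/-- A `d`-monotone Archimedean generator: the derivatives `ψ⁽ᵏ⁾` exist on `(0,∞)` for
`k = 1,…,d-2`, and `(-1)^(d-2) · ψ^(d-2)` is non-negative, non-increasing and convex
on `(0,∞)`. -/
structure IsdMonotoneGenerator (d : ℕ) (ψ : ℝ → ℝ) : Prop where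
  toIsGenerator : IsGenerator ψ
  differentiable : ∀ k : ℕ, k < d - 2 → ∀ z : ℝ, 0 < z → DifferentiableAt ℝ (deriv^[k] ψ) z
  nonneg : ∀ z : ℝ, 0 < z → 0 ≤ (-1 : ℝ) ^ (d - 2) * deriv^[d - 2] ψ z
  antitoneOn : AntitoneOn (fun z => (-1 : ℝ) ^ (d - 2) * deriv^[d - 2] ψ z) (Ioi 0)
  convexOn : ConvexOn ℝ (Ioi 0) (fun z => (-1 : ℝ) ^ (d - 2) * deriv^[d - 2] ψ z)

/-- The `d`-dimensional Archimedean copula generated by `ψ`: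
`C_ψ(x) = ψ(φ(x₁) + ⋯ + φ(x_d))` (with `ψ(∞) := 0`). -/
def archCopula (d : ℕ) (ψ : ℝ → ℝ) (x : Fin d → ℝ) : ℝ :=
  psiExt ψ (∑ i, pseudoInv ψ (x i))

/-- A generator is strict if `ψ(z) > 0` for all `z ≥ 0`. -/
def IsStrictGenerator (ψ : ℝ → ℝ) : Prop := ∀ z : ℝ, 0 ≤ z → 0 < ψ z

/-- The level set `L_t = {x ∈ [0,1]^d : C_ψ(x) = t}`. -/
def levelSet (d : ℕ) (ψ : ℝ → ℝ) (t : ℝ) : Set (Fin d → ℝ) :=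
  {x | (∀ i, x i ∈ Icc (0 : ℝ) 1) ∧ archCopula d ψ x = t}

/-- The Williamson transform `(W_d γ)(z) = ∫ (1 - tz)₊^(d-1) dγ(t)`. -/
def williamson (d : ℕ) (γ : Measure ℝ) (z : ℝ) : ℝ :=
  ∫ t, max (1 - t * z) 0 ^ (d - 1) ∂γ

/-- The class `P_{W_d}`: Borel probability measures on `[0,∞)` with `γ({0}) = 0` and
`∫_{[0,1]} (1-t)^(d-1) dγ(t) = 1/2`. -/
def memPW (d : ℕ) (γ : Measure ℝ) : Prop :=
  IsProbabilityMeasure γ ∧ γ (Iio 0) = 0 ∧ γ {0} = 0 ∧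
    ∫ t in Icc (0 : ℝ) 1, (1 - t) ^ (d - 1) ∂γ = 1 / 2

/-- The Kendall distribution function `F_K^d(t) = μ_C({x ∈ [0,1]^d : C_ψ(x) ≤ t})`. -/
def kendallDF (d : ℕ) (ψ : ℝ → ℝ) (μ : Measure (Fin d → ℝ)) (t : ℝ) : ℝ :=
  (μ {x | (∀ i, x i ∈ Icc (0 : ℝ) 1) ∧ archCopula d ψ x ≤ t}).toReal

/-! ### The Williamson transform as a generator -/

/-- `γ` is carried by `(0,∞)` and charges every open set meeting `[0,∞)`. -/
structure IsFullMixing (γ : Measure ℝ) : Prop where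
  ae_pos : ∀ᵐ t ∂γ, 0 < t
  open_pos : ∀ U : Set ℝ, IsOpen U → (U ∩ Ici 0).Nonempty → 0 < γ U

lemma williamson_kernel_mem {t z : ℝ} (k : ℕ) (ht : 0 < t) (hz : 0 ≤ z) :
    max (1 - t * z) 0 ^ k ∈ Icc (0 : ℝ) 1 := by
  have h0 : 0 ≤ max (1 - t * z) 0 := le_max_right _ _
  have h1 : max (1 - t * z) 0 ≤ 1 := max_le (by nlinarith) zero_le_one
  exact ⟨pow_nonneg h0 _, pow_le_one₀ h0 h1⟩

lemma integrable_williamson {γ : Measure ℝ} [IsProbabilityMeasure γ] (hγ : IsFullMixing γ)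
    (k : ℕ) {z : ℝ} (hz : 0 ≤ z) : Integrable (fun t => max (1 - t * z) 0 ^ k) γ := by
  refine Integrable.mono' (integrable_const (1 : ℝ)) ?_ ?_
  · exact (by fun_prop : Continuous fun t : ℝ => max (1 - t * z) 0 ^ k).aestronglyMeasurable
  · filter_upwards [hγ.ae_pos] with t ht
    have := williamson_kernel_mem k ht hz
    rw [Real.norm_eq_abs, abs_of_nonneg this.1]
    exact this.2

lemma williamson_zero (d : ℕ) (γ : Measure ℝ) [IsProbabilityMeasure γ] :
    williamson d γ 0 = 1 := by
  simp [williamson]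

lemma williamson_continuousOn (d : ℕ) {γ : Measure ℝ} [IsProbabilityMeasure γ]
    (hγ : IsFullMixing γ) : ContinuousOn (williamson d γ) (Ici 0) := by
  have h : Continuous fun z : ℝ => williamson d γ (max z 0) := by
    unfold williamson
    refine continuous_of_dominated (bound := fun _ => 1) ?_ ?_ (integrable_const _) ?_
    · intro z
      exact (integrable_williamson hγ _ (le_max_right _ _)).aestronglyMeasurable
    · intro z
      filter_upwards [hγ.ae_pos] with t ht
      have := williamson_kernel_mem (d - 1) ht (le_max_right z 0)
      rw [Real.norm_eq_abs, abs_of_nonneg this.1]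
      exact this.2
    · exact ae_of_all _ fun t => by fun_prop
  refine h.continuousOn.congr fun z hz => ?_
  simp only [max_eq_left (mem_Ici.1 hz)]

lemma williamson_strictAntiOn {d : ℕ} (hd : 2 ≤ d) {γ : Measure ℝ} [IsProbabilityMeasure γ]
    (hγ : IsFullMixing γ) : StrictAntiOn (williamson d γ) (Ici 0) := by
  intro x hx y hy hxy
  simp only [mem_Ici] at hx hy
  have hy' : 0 < y := hx.trans_lt hxy
  have hle : (fun t => max (1 - t * y) 0 ^ (d - 1)) ≤ᵐ[γ] fun t => max (1 - t * x) 0 ^ (d - 1) := by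
    filter_upwards [hγ.ae_pos] with t ht
    refine pow_le_pow_left₀ (le_max_right _ _) (max_le_max ?_ le_rfl) _
    nlinarith
  refine lt_of_le_of_ne
    (integral_mono_ae (integrable_williamson hγ _ hy) (integrable_williamson hγ _ hx) hle) ?_
  intro heq
  have hae := (integral_eq_iff_of_ae_le (integrable_williamson hγ _ hy)
    (integrable_williamson hγ _ hx) hle).1 heq
  have hpos : 0 < γ (Ioo (-1) y⁻¹) :=
    hγ.open_pos _ isOpen_Ioo ⟨0, ⟨by norm_num, by positivity⟩, mem_Ici.2 le_rfl⟩
  refine hpos.ne' (measure_eq_zero_iff_ae_notMem.2 ?_)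
  filter_upwards [hae, hγ.ae_pos] with t h1 ht hmem
  have h2 : t * y < 1 := by
    have := mul_lt_mul_of_pos_right hmem.2 hy'
    rwa [inv_mul_cancel₀ hy'.ne'] at this
  have h3 : max (1 - t * y) 0 < max (1 - t * x) 0 := by
    rw [max_eq_left (by linarith)]
    exact lt_max_of_lt_left (by nlinarith)
  exact (pow_lt_pow_left₀ h3 (le_max_right _ _) (by omega)).ne h1

lemma williamson_tendsto {d : ℕ} (hd : 2 ≤ d) {γ : Measure ℝ} [IsProbabilityMeasure γ]
    (hγ : IsFullMixing γ) : Tendsto (williamson d γ) atTop (𝓝 0) := by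
  have h : Tendsto (fun z => ∫ t, max (1 - t * z) 0 ^ (d - 1) ∂γ) atTop
      (𝓝 (∫ _t : ℝ, (0 : ℝ) ∂γ)) := by
    refine tendsto_integral_filter_of_dominated_convergence (fun _ => 1) ?_ ?_
      (integrable_const _) ?_
    · exact .of_forall fun z =>
        (by fun_prop : Continuous fun t : ℝ => max (1 - t * z) 0 ^ (d - 1)).aestronglyMeasurable
    · filter_upwards [eventually_ge_atTop 0] with z hz
      filter_upwards [hγ.ae_pos] with t ht
      have := williamson_kernel_mem (d - 1) ht hz
      rw [Real.norm_eq_abs, abs_of_nonneg this.1]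
      exact this.2
    · filter_upwards [hγ.ae_pos] with t ht
      refine tendsto_const_nhds.congr' ?_
      filter_upwards [eventually_ge_atTop t⁻¹] with z hz
      have : 1 ≤ t * z := by
        have := mul_le_mul_of_nonneg_left hz ht.le
        rwa [mul_inv_cancel₀ ht.ne'] at this
      rw [max_eq_right (by linarith), zero_pow (by omega)]
  rw [integral_zero] at h
  exact h

lemma williamson_pos {d : ℕ} (hd : 2 ≤ d) {γ : Measure ℝ} [IsProbabilityMeasure γ]
    (hγ : IsFullMixing γ) {z : ℝ} (hz : 0 ≤ z) : 0 < williamson d γ z := by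
  have h1 : williamson d γ (z + 1) < williamson d γ z :=
    williamson_strictAntiOn hd hγ (mem_Ici.2 hz) (mem_Ici.2 (by linarith)) (by linarith)
  refine lt_of_le_of_lt (integral_nonneg fun t => ?_) h1
  exact pow_nonneg (le_max_right _ _) _

lemma williamson_le_one {d : ℕ} (hd : 2 ≤ d) {γ : Measure ℝ} [IsProbabilityMeasure γ]
    (hγ : IsFullMixing γ) {z : ℝ} (hz : 0 ≤ z) : williamson d γ z ≤ 1 := by
  rw [← williamson_zero d γ]
  exact (williamson_strictAntiOn hd hγ).antitoneOn (mem_Ici.2 le_rfl) (mem_Ici.2 hz) hz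

lemma williamson_surj {d : ℕ} (hd : 2 ≤ d) {γ : Measure ℝ} [IsProbabilityMeasure γ]
    (hγ : IsFullMixing γ) {y : ℝ} (hy : y ∈ Ioc (0 : ℝ) 1) : ∃ z, 0 ≤ z ∧ williamson d γ z = y := by
  obtain ⟨b, hb, hb0⟩ := (((williamson_tendsto hd hγ).eventually_lt_const hy.1).and
    (eventually_ge_atTop 0)).exists
  have hc : ContinuousOn (williamson d γ) (Icc 0 b) :=
    (williamson_continuousOn d hγ).mono Icc_subset_Ici_self
  obtain ⟨z, hz, h⟩ := intermediate_value_Icc' hb0 hc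
    ⟨hb.le, by rw [williamson_zero]; exact hy.2⟩
  exact ⟨z, hz.1, h⟩

lemma williamson_pos_surj {d : ℕ} (hd : 2 ≤ d) {γ : Measure ℝ} [IsProbabilityMeasure γ]
    (hγ : IsFullMixing γ) {y : ℝ} (hy : y ∈ Ioo (0 : ℝ) 1) : ∃ z, 0 < z ∧ williamson d γ z = y := by
  obtain ⟨z, hz, h⟩ := williamson_surj hd hγ ⟨hy.1, hy.2.le⟩
  refine ⟨z, lt_of_le_of_ne hz ?_, h⟩
  rintro rfl
  rw [williamson_zero] at h
  exact hy.2.ne' h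

lemma williamson_measurable (d : ℕ) (γ : Measure ℝ) [IsProbabilityMeasure γ] :
    Measurable (williamson d γ) := by
  unfold williamson
  have : StronglyMeasurable (Function.uncurry fun z t : ℝ => max (1 - t * z) 0 ^ (d - 1)) :=
    (by fun_prop : Continuous fun p : ℝ × ℝ => max (1 - p.2 * p.1) 0 ^ (d - 1)).stronglyMeasurable
  exact this.integral_prod_right.measurable

/-- On `[ε,∞)` the kernel `(1 - t z)₊ᵏ` vanishes unless `t ≤ 1/ε`, so that its slope in `z` is at
most `k/ε` uniformly in `t`. -/
lemma williamson_lipschitzOn (d : ℕ) {γ : Measure ℝ} [IsProbabilityMeasure γ]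
    (hγ : IsFullMixing γ) {ε : ℝ} (hε : 0 < ε) :
    ∃ K : ℝ≥0, LipschitzOnWith K (williamson d γ) (Ici ε) := by
  refine ⟨Real.toNNReal ((d - 1 : ℕ) / ε), LipschitzOnWith.of_dist_le_mul ?_⟩
  intro x hx y hy
  simp only [mem_Ici] at hx hy
  have hx0 := hε.trans_le hx
  have hy0 := hε.trans_le hy
  rw [Real.coe_toNNReal _ (by positivity), Real.dist_eq, Real.dist_eq, williamson, williamson,
    ← integral_sub (integrable_williamson hγ _ hx0.le) (integrable_williamson hγ _ hy0.le)]
  have := norm_integral_le_of_norm_le_const (μ := γ)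
    (f := fun t => max (1 - t * x) 0 ^ (d - 1) - max (1 - t * y) 0 ^ (d - 1))
    (C := (d - 1 : ℕ) / ε * |x - y|) ?_
  · simpa using this
  filter_upwards [hγ.ae_pos] with t ht
  rw [Real.norm_eq_abs]
  by_cases htε : 1 ≤ t * ε
  · have h1 : 1 - t * x ≤ 0 := by nlinarith
    have h2 : 1 - t * y ≤ 0 := by nlinarith
    rw [max_eq_right h1, max_eq_right h2, sub_self, abs_zero]
    positivity
  have hk : ∀ z : ℝ, 0 < z → |max (1 - t * z) 0| ≤ 1 := fun z hz => by
    rw [abs_of_nonneg (le_max_right _ _)]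
    exact max_le (by nlinarith) zero_le_one
  have htle : t ≤ 1 / ε := by rw [le_div_iff₀ hε]; linarith
  calc |max (1 - t * x) 0 ^ (d - 1) - max (1 - t * y) 0 ^ (d - 1)|
      ≤ |max (1 - t * x) 0 - max (1 - t * y) 0| * (d - 1 : ℕ)
        * max |max (1 - t * x) 0| |max (1 - t * y) 0| ^ (d - 1 - 1) := abs_pow_sub_pow_le _ _ _
    _ ≤ (t * |x - y|) * (d - 1 : ℕ) * 1 := by
        gcongr
        · refine (abs_max_sub_max_le_abs _ _ _).trans (le_of_eq ?_)
          rw [show 1 - t * x - (1 - t * y) = -(t * (x - y)) by ring, abs_neg, abs_mul,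
            abs_of_pos ht]
        · exact pow_le_one₀ (le_max_of_le_left (abs_nonneg _)) (max_le (hk x hx0) (hk y hy0))
    _ ≤ (1 / ε * |x - y|) * (d - 1 : ℕ) * 1 := by gcongr
    _ = (d - 1 : ℕ) / ε * |x - y| := by ring

/-- The generator maps Lebesgue-null subsets of `(0,∞)` to null sets, being Lipschitz on each
`[1/(n+1),∞)`. -/
lemma volume_image_williamson (d : ℕ) {γ : Measure ℝ} [IsProbabilityMeasure γ]
    (hγ : IsFullMixing γ) {M : Set ℝ} (hM : volume M = 0) (hM0 : M ⊆ Ioi 0) :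
    volume (williamson d γ '' M) = 0 := by
  have hsub : williamson d γ '' M ⊆
      ⋃ n : ℕ, williamson d γ '' (M ∩ Ici (1 / ((n : ℝ) + 1))) := by
    rintro _ ⟨z, hz, rfl⟩
    obtain ⟨n, hn⟩ := exists_nat_one_div_lt (mem_Ioi.1 (hM0 hz))
    exact mem_iUnion.2 ⟨n, z, ⟨hz, hn.le⟩, rfl⟩
  refine measure_mono_null hsub (measure_iUnion_null fun n => ?_)
  obtain ⟨K, hK⟩ := williamson_lipschitzOn d hγ (ε := 1 / ((n : ℝ) + 1)) (by positivity)
  have h := (hK.mono inter_subset_right : LipschitzOnWith K (williamson d γ)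
    (M ∩ Ici (1 / ((n : ℝ) + 1)))).hausdorffMeasure_image_le (d := 1) zero_le_one
  rw [hausdorffMeasure_real, measure_mono_null inter_subset_left hM, mul_zero] at h
  exact le_antisymm h bot_le

/-! ### The pseudo-inverse -/

lemma psiExt_ofReal (ψ : ℝ → ℝ) {z : ℝ} (hz : 0 ≤ z) : psiExt ψ (ENNReal.ofReal z) = ψ z := by
  simp [psiExt, ENNReal.toReal_ofReal hz]

lemma psiExt_of_ne_top (ψ : ℝ → ℝ) {w : ℝ≥0∞} (hw : w ≠ ∞) : psiExt ψ w = ψ w.toReal := by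
  simp [psiExt, hw]

lemma measurable_psiExt {ψ : ℝ → ℝ} (hψ : Measurable ψ) : Measurable (psiExt ψ) := by
  unfold psiExt
  exact Measurable.ite (measurableSet_singleton _) measurable_const
    (hψ.comp ENNReal.measurable_toReal)

/-- A globally antitone, hence measurable, function agreeing with the pseudo-inverse on `[0,1]`. -/
def monoInv (ψ : ℝ → ℝ) (y : ℝ) : ℝ≥0∞ := sInf {w : ℝ≥0∞ | psiExt ψ w ≤ y}

lemma measurable_monoInv (ψ : ℝ → ℝ) : Measurable (monoInv ψ) := by
  have : Antitone (monoInv ψ) := fun x y hxy =>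
    sInf_le_sInf fun w (hw : psiExt ψ w ≤ x) => show psiExt ψ w ≤ y from hw.trans hxy
  exact this.measurable

section inverse

variable {d : ℕ} {γ : Measure ℝ} [IsProbabilityMeasure γ]

lemma pseudoInv_zero (hd : 2 ≤ d) (hγ : IsFullMixing γ) :
    pseudoInv (williamson d γ) 0 = ∞ := by
  refine sInf_eq_top.2 fun w hw => ?_
  by_contra hne
  have hw' : psiExt (williamson d γ) w = 0 := hw
  rw [psiExt_of_ne_top _ hne] at hw'
  exact (williamson_pos hd hγ ENNReal.toReal_nonneg).ne' hw'

lemma monoInv_zero (hd : 2 ≤ d) (hγ : IsFullMixing γ) :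
    monoInv (williamson d γ) 0 = ∞ := by
  refine sInf_eq_top.2 fun w hw => ?_
  by_contra hne
  have hw' : psiExt (williamson d γ) w ≤ 0 := hw
  rw [psiExt_of_ne_top _ hne] at hw'
  exact (williamson_pos hd hγ ENNReal.toReal_nonneg).not_ge hw'

lemma pseudoInv_williamson (hd : 2 ≤ d) (hγ : IsFullMixing γ) {z : ℝ} (hz : 0 ≤ z) :
    pseudoInv (williamson d γ) (williamson d γ z) = ENNReal.ofReal z := by
  refine IsLeast.csInf_eq ⟨psiExt_ofReal _ hz, fun w hw => ?_⟩
  by_cases hne : w = ∞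
  · simp [hne]
  have hw' : psiExt (williamson d γ) w = williamson d γ z := hw
  rw [psiExt_of_ne_top _ hne] at hw'
  have := (williamson_strictAntiOn hd hγ).injOn (mem_Ici.2 ENNReal.toReal_nonneg)
    (mem_Ici.2 hz) hw'
  rw [← this, ENNReal.ofReal_toReal hne]

lemma monoInv_williamson (hd : 2 ≤ d) (hγ : IsFullMixing γ) {z : ℝ} (hz : 0 ≤ z) :
    monoInv (williamson d γ) (williamson d γ z) = ENNReal.ofReal z := by
  refine IsLeast.csInf_eq ⟨(psiExt_ofReal _ hz).le, fun w hw => ?_⟩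
  by_cases hne : w = ∞
  · simp [hne]
  have hw' : psiExt (williamson d γ) w ≤ williamson d γ z := hw
  rw [psiExt_of_ne_top _ hne] at hw'
  have := ((williamson_strictAntiOn hd hγ).le_iff_ge (mem_Ici.2 ENNReal.toReal_nonneg)
    (mem_Ici.2 hz)).1 hw'
  exact ENNReal.ofReal_le_of_le_toReal this

lemma monoInv_eq_pseudoInv (hd : 2 ≤ d) (hγ : IsFullMixing γ) {y : ℝ} (hy : y ∈ Icc (0 : ℝ) 1) :
    monoInv (williamson d γ) y = pseudoInv (williamson d γ) y := by
  rcases hy.1.eq_or_lt with rfl | h0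
  · rw [monoInv_zero hd hγ, pseudoInv_zero hd hγ]
  · obtain ⟨z, hz, rfl⟩ := williamson_surj hd hγ ⟨h0, hy.2⟩
    rw [monoInv_williamson hd hγ hz, pseudoInv_williamson hd hγ hz]

lemma measurableSet_copula (hd : 2 ≤ d) (hγ : IsFullMixing γ) {B : Set ℝ} (hB : MeasurableSet B) :
    MeasurableSet {x : Fin d → ℝ | (∀ i, x i ∈ Icc (0 : ℝ) 1) ∧
      archCopula d (williamson d γ) x ∈ B} := by
  have : {x : Fin d → ℝ | (∀ i, x i ∈ Icc (0 : ℝ) 1) ∧ archCopula d (williamson d γ) x ∈ B} =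
      (univ.pi fun _ => Icc (0 : ℝ) 1) ∩
        (fun x : Fin d → ℝ => psiExt (williamson d γ)
          (∑ i, monoInv (williamson d γ) (x i))) ⁻¹' B := by
    ext x
    simp only [mem_ofPred_eq, mem_inter_iff, mem_univ_pi, mem_preimage, archCopula]
    refine and_congr_right fun hx => ?_
    rw [Finset.sum_congr rfl fun i _ => monoInv_eq_pseudoInv hd hγ (hx i)]
  rw [this]
  refine (MeasurableSet.univ_pi fun _ => measurableSet_Icc).inter ?_
  refine ((measurable_psiExt (williamson_measurable d γ)).comp ?_) hB
  exact Finset.measurable_sum _ fun i _ => (measurable_monoInv _).comp (measurable_pi_apply i)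

end inverse

/-! ### A singular atomless mixing measure with full support -/

/-- The Liouville numbers form a Lebesgue-null residual set, so they meet `(a,b)` in an uncountable
Borel set; transporting Lebesgue measure to it by a Borel isomorphism gives a singular atomless
probability. -/
lemma exists_atomless_singular_Ioo {a b : ℝ} (hab : a < b) :
    ∃ α : Measure ℝ, IsProbabilityMeasure α ∧ (∀ x, α {x} = 0) ∧ α (Ioo a b)ᶜ = 0 ∧
      α {x | Liouville x}ᶜ = 0 := by
  set S : Set ℝ := Ioo a b ∩ {x | Liouville x} with hS
  have hSm : MeasurableSet S :=
    measurableSet_Ioo.inter IsGδ.setOfPred_liouville.measurableSet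
  have hSc : ¬ S.Countable := by
    intro hc
    have h1 : Sᶜ ∈ residual ℝ := by
      have : (⋂ x ∈ S, ({x}ᶜ : Set ℝ)) ∈ residual ℝ :=
        (countable_bInter_mem hc).2 fun x _ =>
          residual_of_dense_open isOpen_compl_singleton (dense_compl_singleton x)
      refine mem_of_superset this fun y hy hyS => ?_
      exact (mem_iInter₂.1 hy y hyS) rfl
    have h2 : {x | Liouville x} ∈ residual ℝ := eventually_residual_liouville
    obtain ⟨x, hx, hxab⟩ := (dense_of_mem_residual (inter_mem h1 h2)).exists_mem_open
      isOpen_Ioo (nonempty_Ioo.2 hab)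
    exact hx.1 ⟨hxab, hx.2⟩
  have : StandardBorelSpace S := hSm.standardBorel
  have hScount : ¬ Countable S := fun h => hSc (countable_coe_iff.1 h)
  have hR : ¬ Countable ℝ := not_countable
  let e : ℝ ≃ᵐ S := PolishSpace.measurableEquivOfNotCountable hR hScount
  have hf : Measurable fun x => (e x : ℝ) := measurable_subtype_coe.comp e.measurable
  have hP : IsProbabilityMeasure (volume.restrict (Icc (0 : ℝ) 1)) := ⟨by simp⟩
  have hmem : ∀ T : Set ℝ, MeasurableSet T → S ⊆ T →
      (volume.restrict (Icc (0 : ℝ) 1)).map (fun x => (e x : ℝ)) Tᶜ = 0 := by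
    intro T hT hST
    rw [Measure.map_apply hf hT.compl]
    have : (fun x => (e x : ℝ)) ⁻¹' Tᶜ = ∅ :=
      eq_empty_of_forall_notMem fun x hx => hx (hST (e x).2)
    rw [this, measure_empty]
  refine ⟨(volume.restrict (Icc (0 : ℝ) 1)).map (fun x => (e x : ℝ)),
    Measure.isProbabilityMeasure_map hf.aemeasurable, fun x => ?_, ?_, ?_⟩
  · rw [Measure.map_apply hf (measurableSet_singleton x)]
    refine Set.Subsingleton.measure_zero (fun u hu v hv => ?_) _
    refine e.injective (Subtype.ext ?_)
    exact (show (e u : ℝ) = x from hu).trans (show (e v : ℝ) = x from hv).symm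
  · exact hmem _ measurableSet_Ioo inter_subset_left
  · exact hmem _ IsGδ.setOfPred_liouville.measurableSet inter_subset_right

/-- Singular atomless measures on all rational intervals of `[0,∞)` are summed, and the countable
sum is replaced by a probability measure with the same null sets. -/
lemma exists_fullMixing_singular_atomless :
    ∃ β : Measure ℝ, IsProbabilityMeasure β ∧ IsFullMixing β ∧ β ⟂ₘ volume ∧ ∀ x, β {x} = 0 := by
  have hι : ∀ p : {p : ℚ × ℚ // 0 ≤ p.1 ∧ p.1 < p.2}, ((p.1.1 : ℚ) : ℝ) < (p.1.2 : ℚ) :=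
    fun p => by exact_mod_cast p.2.2
  choose α hα hat hIoo hL using fun p => exists_atomless_singular_Ioo (hι p)
  have hzero : ∀ s : Set ℝ, MeasurableSet s → (∀ p, α p s = 0) → (Measure.sum α).toFinite s = 0 :=
    fun s hs h => toFinite_absolutelyContinuous _ (by rw [Measure.sum_apply _ hs]; simp [h])
  have hle : ∀ p s, (Measure.sum α).toFinite s = 0 → α p s = 0 := fun p s h =>
    le_antisymm ((Measure.le_sum α p s).trans_eq (absolutelyContinuous_toFinite _ h)) bot_le
  have hne : NeZero (Measure.sum α) := ⟨fun h => by
    have h1 := hle ⟨(0, 1), by norm_num⟩ univ (by simp [h])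
    rw [measure_univ] at h1
    exact one_ne_zero h1⟩
  refine ⟨(Measure.sum α).toFinite, inferInstance, ⟨?_, ?_⟩, ?_, ?_⟩
  · have h := hzero (Ioi 0)ᶜ measurableSet_Ioi.compl fun p => measure_mono_null
      (compl_subset_compl.2 fun x hx => ?_) (hIoo p)
    · exact measure_eq_zero_iff_ae_notMem.1 h |>.mono fun t ht => by simpa using ht
    · exact lt_of_le_of_lt (by exact_mod_cast p.2.1) hx.1
  · rintro U hU ⟨x, hxU, hx⟩
    refine pos_iff_ne_zero.2 fun h0 => ?_
    -- every neighbourhood of a point of `[0,∞)` contains an interval with rational endpoints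
    obtain ⟨ε, hε, hball⟩ := Metric.isOpen_iff.1 hU x hxU
    obtain ⟨a, ha1, ha2⟩ := exists_rat_btwn (show x < x + ε / 2 by linarith)
    obtain ⟨b, hb1, hb2⟩ := exists_rat_btwn (show x + ε / 2 < x + ε by linarith)
    have hx' : 0 ≤ x := hx
    have ha : (0 : ℚ) ≤ a := by exact_mod_cast hx'.trans ha1.le
    have hab : a < b := by exact_mod_cast ha2.trans hb1
    have h1 : α ⟨(a, b), ha, hab⟩ (Ioo (a : ℝ) b) = 0 :=
      measure_mono_null (fun y hy => hball ?_) (hle ⟨(a, b), ha, hab⟩ U h0)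
    · have h2 := measure_union_le (μ := α ⟨(a, b), ha, hab⟩) (Ioo (a : ℝ) b) (Ioo (a : ℝ) b)ᶜ
      rw [union_compl_self, measure_univ, h1, hIoo ⟨(a, b), ha, hab⟩] at h2
      simp at h2
    · rw [Metric.mem_ball, Real.dist_eq, abs_lt]
      constructor <;> linarith [hy.1, hy.2]
  · refine Measure.MutuallySingular.mk (s := {x | Liouville x}ᶜ) (t := {x | Liouville x})
      (hzero _ IsGδ.setOfPred_liouville.measurableSet.compl hL) volume_setOfPred_liouville ?_
    rw [compl_union_self]
  · exact fun x => hzero _ (measurableSet_singleton x) fun p => hat p x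

lemma exists_memPW {d : ℕ} (hd : 2 ≤ d) :
    ∃ γ : Measure ℝ, memPW d γ ∧ γ ⟂ₘ volume ∧ (∀ x : ℝ, γ {x} = 0) ∧
      (∀ U : Set ℝ, IsOpen U → (U ∩ Ici 0).Nonempty → 0 < γ U) := by
  obtain ⟨β, hβ, hmix, hsing, hat⟩ := exists_fullMixing_singular_atomless
  -- rescaling by the point `s` where the transform equals `1/2` achieves the normalization
  obtain ⟨s, hs, hs2⟩ := williamson_pos_surj hd hmix (y := 1 / 2) (by norm_num)
  have hmeas : Measurable fun t : ℝ => t * s := measurable_id.mul_const s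
  have hemb : MeasurableEmbedding fun t : ℝ => t * s :=
    (MeasurableEquiv.mulRight₀ s hs.ne').measurableEmbedding
  have hzero : ∀ x, β.map (fun t => t * s) {x} = 0 := fun x => by
    rw [Measure.map_apply hmeas (measurableSet_singleton x)]
    have : (fun t => t * s) ⁻¹' {x} ⊆ {x / s} := fun t ht => by
      rw [mem_singleton_iff, eq_div_iff hs.ne']; exact ht
    exact measure_mono_null this (hat _)
  have hneg : β.map (fun t => t * s) (Iio 0) = 0 := by
    rw [Measure.map_apply hmeas measurableSet_Iio]
    refine measure_eq_zero_iff_ae_notMem.2 ?_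
    filter_upwards [hmix.ae_pos] with t ht h
    exact (mul_pos ht hs).not_gt h
  refine ⟨β.map fun t => t * s, ⟨Measure.isProbabilityMeasure_map hmeas.aemeasurable, hneg,
    hzero 0, ?_⟩, ?_, hzero, ?_⟩
  · rw [← hs2, williamson, ← integral_indicator measurableSet_Icc, hemb.integral_map]
    refine integral_congr_ae ?_
    filter_upwards [hmix.ae_pos] with t ht
    have h0 : 0 ≤ t * s := (mul_pos ht hs).le
    by_cases h1 : t * s ≤ 1
    · rw [indicator_of_mem (show t * s ∈ Icc (0 : ℝ) 1 from ⟨h0, h1⟩), max_eq_left (by linarith)]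
    · rw [indicator_of_notMem (fun h => h1 h.2), max_eq_right (by linarith [not_le.1 h1]),
        zero_pow (by omega)]
  · refine (hemb.mutuallySingular_map hsing).mono_ac Measure.AbsolutelyContinuous.rfl ?_
    rw [Real.map_volume_mul_right hs.ne']
    refine Measure.absolutelyContinuous_smul ?_
    simp [hs.ne']
  · rintro U hU ⟨x, hxU, hx⟩
    rw [Measure.map_apply hmeas hU.measurableSet]
    refine hmix.open_pos _ (hU.preimage (continuous_id.mul continuous_const)) ⟨x / s, ?_, ?_⟩
    · simpa [div_mul_cancel₀ _ hs.ne'] using hxU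
    · exact div_nonneg hx hs.le

/-! ### The uniform distribution on the simplex -/

/-- The solid corner simplex `{w ≥ 0, ∑ wᵢ ≤ r}` in `ℝᵐ`. -/
def cornerSimplex (m : ℕ) (r : ℝ) : Set (Fin m → ℝ) := {w | (∀ i, 0 ≤ w i) ∧ ∑ i, w i ≤ r}

/-- The uniform distribution on `cornerSimplex m 1`. -/
def simplexMeasure (m : ℕ) : Measure (Fin m → ℝ) :=
  (volume (cornerSimplex m 1))⁻¹ • volume.restrict (cornerSimplex m 1)

/-- The point of the unit simplex of `ℝᵐ⁺¹` with last `m` coordinates `w`. -/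
def simplexPoint {m : ℕ} (w : Fin m → ℝ) : Fin (m + 1) → ℝ := Fin.cons (1 - ∑ i, w i) w

lemma sum_simplexPoint {m : ℕ} (w : Fin m → ℝ) : ∑ i, simplexPoint w i = 1 := by
  simp [simplexPoint, Fin.sum_univ_succ]

lemma continuous_simplexPoint {m : ℕ} : Continuous (simplexPoint (m := m)) := by
  refine continuous_pi fun i => ?_
  refine Fin.cases ?_ (fun j => ?_) i
  · simp only [simplexPoint, Fin.cons_zero]; fun_prop
  · simp only [simplexPoint, Fin.cons_succ]; fun_prop

lemma simplexPoint_nonneg {m : ℕ} {w : Fin m → ℝ} (hw : w ∈ cornerSimplex m 1) (i : Fin (m + 1)) :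
    0 ≤ simplexPoint w i := by
  refine Fin.cases ?_ (fun j => ?_) i
  · simp only [simplexPoint, Fin.cons_zero]; linarith [hw.2]
  · simp only [simplexPoint, Fin.cons_succ]; exact hw.1 j

lemma isClosed_cornerSimplex (m : ℕ) (r : ℝ) : IsClosed (cornerSimplex m r) := by
  have : cornerSimplex m r = (⋂ i, {w | 0 ≤ w i}) ∩ {w | ∑ i, w i ≤ r} := by
    ext w; simp [cornerSimplex]
  rw [this]
  exact (isClosed_iInter fun i => isClosed_le continuous_const (continuous_apply i)).inter
    (isClosed_le (by fun_prop) continuous_const)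

lemma volume_cornerSimplex_ne_top (m : ℕ) : volume (cornerSimplex m 1) ≠ ∞ := by
  have hsub : cornerSimplex m 1 ⊆ Icc 0 1 := fun w hw =>
    ⟨fun i => hw.1 i, fun i =>
      (Finset.single_le_sum (fun j _ => hw.1 j) (Finset.mem_univ i)).trans hw.2⟩
  exact ((measure_mono hsub).trans_lt isCompact_Icc.measure_lt_top).ne

/-- The open simplex, on which the uniform distribution charges all open sets. -/
def openSimplex (m : ℕ) : Set (Fin m → ℝ) := {w | (∀ i, 0 < w i) ∧ ∑ i, w i < 1}

lemma isOpen_openSimplex (m : ℕ) : IsOpen (openSimplex m) := by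
  have : openSimplex m = (⋂ i, {w | 0 < w i}) ∩ {w | ∑ i, w i < 1} := by
    ext w; simp [openSimplex]
  rw [this]
  exact (isOpen_iInter_of_finite fun i => isOpen_lt continuous_const (continuous_apply i)).inter
    (isOpen_lt (by fun_prop) continuous_const)

lemma openSimplex_subset (m : ℕ) : openSimplex m ⊆ cornerSimplex m 1 :=
  fun _ hw => ⟨fun i => (hw.1 i).le, hw.2.le⟩

lemma volume_cornerSimplex_ne_zero (m : ℕ) : volume (cornerSimplex m 1) ≠ 0 := by
  have hne : (openSimplex m).Nonempty := by
    refine ⟨fun _ => 1 / ((m : ℝ) + 1), fun i => by positivity, ?_⟩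
    rw [Finset.sum_const, Finset.card_univ, Fintype.card_fin, nsmul_eq_mul, mul_one_div,
      div_lt_one (by positivity)]
    linarith
  exact (((isOpen_openSimplex m).measure_pos volume hne).trans_le
    (measure_mono (openSimplex_subset m))).ne'

instance (m : ℕ) : IsProbabilityMeasure (simplexMeasure m) := ⟨by
  rw [simplexMeasure, Measure.smul_apply, Measure.restrict_apply_univ, smul_eq_mul,
    ENNReal.inv_mul_cancel (volume_cornerSimplex_ne_zero m) (volume_cornerSimplex_ne_top m)]⟩

lemma ae_mem_cornerSimplex (m : ℕ) : ∀ᵐ w ∂simplexMeasure m, w ∈ cornerSimplex m 1 :=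
  Measure.ae_smul_measure (ae_restrict_mem (isClosed_cornerSimplex m 1).measurableSet) _

lemma simplexMeasure_pos {m : ℕ} {V : Set (Fin m → ℝ)} (hV : IsOpen V)
    (hne : (V ∩ openSimplex m).Nonempty) : 0 < simplexMeasure m V := by
  rw [simplexMeasure, Measure.smul_apply, smul_eq_mul, Measure.restrict_apply hV.measurableSet]
  refine ENNReal.mul_pos (ENNReal.inv_ne_zero.2 (volume_cornerSimplex_ne_top m)) ?_
  exact (((hV.inter (isOpen_openSimplex m)).measure_pos volume hne).trans_le
    (measure_mono (inter_subset_inter_right _ (openSimplex_subset m)))).ne'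

open scoped Pointwise in
lemma volume_cornerSimplex {m : ℕ} (hm : m ≠ 0) (r : ℝ) :
    volume (cornerSimplex m r) = ENNReal.ofReal (max r 0 ^ m) * volume (cornerSimplex m 1) := by
  rcases lt_trichotomy r 0 with hr | rfl | hr
  · have : cornerSimplex m r = ∅ := eq_empty_of_forall_notMem fun w hw =>
      (hw.2.trans_lt hr).not_ge (Finset.sum_nonneg fun i _ => hw.1 i)
    rw [this, max_eq_right hr.le, zero_pow hm]
    simp
  · have : Nonempty (Fin m) := ⟨⟨0, Nat.pos_of_ne_zero hm⟩⟩
    have hsub : cornerSimplex m 0 ⊆ {0} := fun w hw => by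
      have h := (Finset.sum_eq_zero_iff_of_nonneg fun i _ => hw.1 i).1
        (le_antisymm hw.2 (Finset.sum_nonneg fun i _ => hw.1 i))
      exact funext fun i => h i (Finset.mem_univ i)
    rw [measure_mono_null hsub (measure_singleton _), max_self, zero_pow hm]
    simp
  · have : cornerSimplex m r = r • cornerSimplex m 1 := by
      ext w
      rw [mem_smul_set_iff_inv_smul_mem₀ hr.ne']
      simp only [cornerSimplex, mem_ofPred_eq, Pi.smul_apply, smul_eq_mul, ← Finset.mul_sum]
      rw [inv_mul_le_iff₀ hr, mul_one]
      refine and_congr_left fun _ => forall_congr' fun i => ?_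
      exact (mul_nonneg_iff_of_pos_left (inv_pos.2 hr)).symm
    rw [this, Measure.addHaar_smul, Module.finrank_fin_fun, max_eq_left hr.le,
      abs_of_nonneg (pow_nonneg hr.le m)]

/-- The survival function of the uniform distribution on the unit simplex: the part of the simplex
above `s` is a translate of the simplex scaled by `1 - ∑ sᵢ`. -/
lemma simplexMeasure_survival {m : ℕ} (hm : m ≠ 0) {s : Fin (m + 1) → ℝ} (hs : ∀ i, 0 ≤ s i) :
    simplexMeasure m {w | ∀ i, s i ≤ simplexPoint w i} =
      ENNReal.ofReal (max (1 - ∑ i, s i) 0 ^ m) := by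
  have hmeas : MeasurableSet {w : Fin m → ℝ | ∀ i, s i ≤ simplexPoint w i} := by
    have : {w : Fin m → ℝ | ∀ i, s i ≤ simplexPoint w i} =
        ⋂ i, {w | s i ≤ simplexPoint w i} := by ext w; simp
    rw [this]
    exact MeasurableSet.iInter fun i => (isClosed_le continuous_const
      ((continuous_apply i).comp continuous_simplexPoint)).measurableSet
  have hset : {w : Fin m → ℝ | ∀ i, s i ≤ simplexPoint w i} ∩ cornerSimplex m 1 =
      (fun w => w + (-fun i : Fin m => s i.succ)) ⁻¹' cornerSimplex m (1 - ∑ i, s i) := by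
    ext w
    simp only [mem_inter_iff, mem_ofPred_eq, mem_preimage, cornerSimplex, Fin.forall_fin_succ,
      simplexPoint, Fin.cons_zero, Fin.cons_succ, Pi.add_apply, Pi.neg_apply,
      Finset.sum_add_distrib, Finset.sum_neg_distrib, Fin.sum_univ_succ]
    constructor
    · rintro ⟨⟨h0, h1⟩, -, -⟩
      exact ⟨fun i => by linarith [h1 i], by linarith⟩
    · rintro ⟨h1, h2⟩
      exact ⟨⟨by linarith, fun i => by linarith [h1 i]⟩, fun i => by linarith [h1 i, hs i.succ],
        by linarith [hs 0]⟩
  rw [simplexMeasure, Measure.smul_apply, smul_eq_mul, Measure.restrict_apply hmeas, hset,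
    measure_preimage_add_right, volume_cornerSimplex hm (1 - ∑ i, s i), mul_comm, mul_assoc,
    ENNReal.mul_inv_cancel (volume_cornerSimplex_ne_zero m) (volume_cornerSimplex_ne_top m),
    mul_one]

/-! ### The stochastic representation -/

/-- The joint law of the mixing variable `T ∼ γ` and an independent uniform point of the simplex. -/
def mixLaw (m : ℕ) (γ : Measure ℝ) : Measure (ℝ × (Fin m → ℝ)) := γ.prod (simplexMeasure m)

/-- The random vector `(ψ(S₁/T), …, ψ(S_d/T))` with `d = m + 1`. -/
def mixVec (m : ℕ) (ψ : ℝ → ℝ) (p : ℝ × (Fin m → ℝ)) (i : Fin (m + 1)) : ℝ :=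
  ψ (simplexPoint p.2 i / p.1)

lemma ae_mixLaw {m : ℕ} {γ : Measure ℝ} (hγ : IsFullMixing γ) :
    ∀ᵐ p ∂mixLaw m γ, 0 < p.1 ∧ p.2 ∈ cornerSimplex m 1 := by
  have h1 : ∀ᵐ p ∂mixLaw m γ, 0 < p.1 := Measure.quasiMeasurePreserving_fst.ae hγ.ae_pos
  have h2 : ∀ᵐ p ∂mixLaw m γ, p.2 ∈ cornerSimplex m 1 :=
    Measure.quasiMeasurePreserving_snd.ae (ae_mem_cornerSimplex m)
  filter_upwards [h1, h2] with p hp1 hp2 using ⟨hp1, hp2⟩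

section representation

variable {m : ℕ} {γ : Measure ℝ} [IsProbabilityMeasure γ]

instance : IsProbabilityMeasure (mixLaw m γ) := by unfold mixLaw; infer_instance

lemma measurable_mixArg (i : Fin (m + 1)) :
    Measurable fun p : ℝ × (Fin m → ℝ) => simplexPoint p.2 i / p.1 :=
  (((measurable_pi_apply i).comp continuous_simplexPoint.measurable).comp measurable_snd).div
    measurable_fst

lemma measurable_mixVec (d : ℕ) : Measurable (mixVec m (williamson d γ)) :=
  measurable_pi_lambda _ fun i => (williamson_measurable d γ).comp (measurable_mixArg i)

lemma mixLaw_survival (hm : m ≠ 0) (hγ : IsFullMixing γ) {z : Fin (m + 1) → ℝ}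
    (hz : ∀ i, 0 ≤ z i) :
    mixLaw m γ {p | ∀ i, z i ≤ simplexPoint p.2 i / p.1} =
      ENNReal.ofReal (williamson (m + 1) γ (∑ i, z i)) := by
  have hmeas : MeasurableSet {p : ℝ × (Fin m → ℝ) | ∀ i, z i ≤ simplexPoint p.2 i / p.1} := by
    have : {p : ℝ × (Fin m → ℝ) | ∀ i, z i ≤ simplexPoint p.2 i / p.1} =
        ⋂ i, {p | z i ≤ simplexPoint p.2 i / p.1} := by ext p; simp
    rw [this]
    exact MeasurableSet.iInter fun i => measurableSet_le measurable_const (measurable_mixArg i)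
  rw [mixLaw, Measure.prod_apply hmeas, williamson, ofReal_integral_eq_lintegral_ofReal
    (integrable_williamson hγ _ (Finset.sum_nonneg fun i _ => hz i))
    (ae_of_all _ fun t => pow_nonneg (le_max_right _ _) _)]
  refine lintegral_congr_ae ?_
  filter_upwards [hγ.ae_pos] with t ht
  have : Prod.mk t ⁻¹' {p : ℝ × (Fin m → ℝ) | ∀ i, z i ≤ simplexPoint p.2 i / p.1} =
      {w | ∀ i, t * z i ≤ simplexPoint w i} := by
    ext w
    simp only [mem_preimage, mem_ofPred_eq]
    exact forall_congr' fun i => by rw [le_div_iff₀ ht, mul_comm]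
  rw [this, simplexMeasure_survival hm fun i => mul_nonneg ht.le (hz i), ← Finset.mul_sum,
    Nat.add_sub_cancel]

/-- The vector `(ψ(S₁/T), …, ψ(S_d/T))` has distribution function `C_ψ` on `[0,1]^d`. -/
lemma mixVec_box (hm : m ≠ 0) (hγ : IsFullMixing γ) {x : Fin (m + 1) → ℝ}
    (hx : ∀ i, x i ∈ Icc (0 : ℝ) 1) :
    (mixLaw m γ).map (mixVec m (williamson (m + 1) γ)) (univ.pi fun i => Icc 0 (x i)) =
      ENNReal.ofReal (archCopula (m + 1) (williamson (m + 1) γ) x) := by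
  have hd : 2 ≤ m + 1 := by omega
  rw [Measure.map_apply (measurable_mixVec _) (MeasurableSet.univ_pi fun _ => measurableSet_Icc)]
  -- a zero coordinate has `φ(0) = ∞`, so the copula vanishes there; the vector is positive a.s.
  by_cases h0 : ∃ i, x i = 0
  · obtain ⟨i, hi⟩ := h0
    have htop : ∑ j, pseudoInv (williamson (m + 1) γ) (x j) = ∞ :=
      ENNReal.sum_eq_top.2 ⟨i, Finset.mem_univ i, by rw [hi, pseudoInv_zero hd hγ]⟩
    rw [archCopula, htop, psiExt, if_pos rfl, ENNReal.ofReal_zero]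
    refine measure_eq_zero_iff_ae_notMem.2 ?_
    filter_upwards [ae_mixLaw hγ] with p hp hmem
    have h1 := (hmem i (mem_univ i)).2
    rw [hi] at h1
    exact (williamson_pos hd hγ (div_nonneg (simplexPoint_nonneg hp.2 i) hp.1.le)).not_ge h1
  push Not at h0
  choose z hz hzx using fun i => williamson_surj hd hγ (y := x i)
    ⟨lt_of_le_of_ne (hx i).1 (h0 i).symm, (hx i).2⟩
  have hsum : ∑ j, pseudoInv (williamson (m + 1) γ) (x j) = ENNReal.ofReal (∑ j, z j) := by
    rw [ENNReal.ofReal_sum_of_nonneg fun i _ => hz i]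
    exact Finset.sum_congr rfl fun i _ => by rw [← hzx i, pseudoInv_williamson hd hγ (hz i)]
  rw [archCopula, hsum, psiExt_ofReal _ (Finset.sum_nonneg fun i _ => hz i),
    ← mixLaw_survival hm hγ hz]
  refine measure_congr ?_
  filter_upwards [ae_mixLaw hγ] with p hp
  refine propext ?_
  change p ∈ mixVec m (williamson (m + 1) γ) ⁻¹' (univ.pi fun i => Icc 0 (x i)) ↔
    ∀ i, z i ≤ simplexPoint p.2 i / p.1
  simp only [mem_preimage, mem_univ_pi, mem_Icc, mixVec]
  refine forall_congr' fun i => ?_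
  have hq : 0 ≤ simplexPoint p.2 i / p.1 := div_nonneg (simplexPoint_nonneg hp.2 i) hp.1.le
  rw [← (williamson_strictAntiOn hd hγ).le_iff_ge (mem_Ici.2 hq) (mem_Ici.2 (hz i)), hzx i]
  exact and_iff_right (williamson_pos hd hγ hq).le

end representation

/-- A probability measure on `ℝ^ι` carried by `[0,1]^ι` is determined by its values on the boxes
`∏ [0, xᵢ]` with `x ∈ [0,1]^ι`. -/
lemma ext_of_unit_boxes {ι : Type*} [Fintype ι] {μ ν : Measure (ι → ℝ)} [IsProbabilityMeasure μ]
    [IsProbabilityMeasure ν] (hμ : μ (univ.pi fun _ => Icc (0 : ℝ) 1) = 1)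
    (h : ∀ x : ι → ℝ, (∀ i, x i ∈ Icc (0 : ℝ) 1) →
      μ (univ.pi fun i => Icc 0 (x i)) = ν (univ.pi fun i => Icc 0 (x i))) : μ = ν := by
  have hν : ν (univ.pi fun _ => Icc (0 : ℝ) 1) = 1 := by
    rw [← h (fun _ => 1) fun _ => ⟨zero_le_one, le_rfl⟩, hμ]
  have hIm : MeasurableSet (univ.pi fun _ : ι => Icc (0 : ℝ) 1) :=
    MeasurableSet.univ_pi fun _ => measurableSet_Icc
  -- both measures are carried by the cube, so boxes `∏ (-∞, xᵢ]` may be cut down to the cube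
  have hcap : ∀ ρ : Measure (ι → ℝ), IsProbabilityMeasure ρ →
      ρ (univ.pi fun _ => Icc (0 : ℝ) 1) = 1 → ∀ s, ρ s = ρ (s ∩ univ.pi fun _ => Icc (0 : ℝ) 1) :=
    fun ρ _ hρ s => (measure_inter_conull ((prob_compl_eq_zero_iff hIm).2 hρ)).symm
  have hspan : ∀ _ : ι, IsCountablySpanning (range (Iic : ℝ → Set ℝ)) := fun _ =>
    ⟨fun n : ℕ => Iic (n : ℝ), fun n => ⟨n, rfl⟩, eq_univ_of_forall fun y =>
      mem_iUnion.2 (exists_nat_ge y)⟩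
  have hgen := generateFrom_pi_eq hspan
  have hborel : (fun _ : ι => MeasurableSpace.generateFrom (range (Iic : ℝ → Set ℝ))) =
      fun _ => (inferInstance : MeasurableSpace ℝ) := by
    funext _
    rw [← borel_eq_generateFrom_Iic ℝ]
    exact (BorelSpace.measurable_eq (α := ℝ)).symm
  rw [hborel] at hgen
  refine ext_of_generate_finite _ hgen (IsPiSystem.pi fun _ => isPiSystem_Iic) ?_ (by simp)
  rintro _ ⟨s, hs, rfl⟩
  choose x hx using fun i => hs i (mem_univ i)
  rw [hcap μ inferInstance hμ, hcap ν inferInstance hν]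
  by_cases hneg : ∃ i, x i < 0
  · obtain ⟨i, hi⟩ := hneg
    have : (univ.pi s ∩ univ.pi fun _ => Icc (0 : ℝ) 1) = ∅ := by
      refine eq_empty_of_forall_notMem fun y hy => ?_
      have h1 := hy.1 i (mem_univ i)
      rw [← hx i] at h1
      exact ((mem_Iic.1 h1).trans_lt hi).not_ge (hy.2 i (mem_univ i)).1
    rw [this, measure_empty, measure_empty]
  · push Not at hneg
    have : (univ.pi s ∩ univ.pi fun _ => Icc (0 : ℝ) 1) =
        univ.pi fun i => Icc 0 (min (x i) 1) := by
      ext y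
      simp only [mem_inter_iff, mem_univ_pi, ← forall_and, ← hx, mem_Icc, mem_Iic, le_min_iff]
      exact forall_congr' fun i => by tauto
    rw [this]
    exact h _ fun i => ⟨le_min (hneg i) zero_le_one, min_le_right _ _⟩

/-! ### Kendall distribution, singularity and support -/

section conclusions

variable {m : ℕ} {γ : Measure ℝ} [IsProbabilityMeasure γ]

/-- Singularity of `γ`, expressed through the law of `1/T`. -/
lemma exists_null_inv_carrier {γ : Measure ℝ} (hγ : IsFullMixing γ) (hs : γ ⟂ₘ volume) :
    ∃ M : Set ℝ, MeasurableSet M ∧ volume M = 0 ∧ M ⊆ Ioi 0 ∧ ∀ᵐ t ∂γ, t⁻¹ ∈ M := by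
  obtain ⟨s, hsm, hs0, hsc⟩ := hs
  refine ⟨Ioi 0 ∩ (fun r : ℝ => r⁻¹) ⁻¹' sᶜ, measurableSet_Ioi.inter (measurable_inv hsm.compl),
    ?_, inter_subset_left, ?_⟩
  · have hsub : Ioi (0 : ℝ) ∩ (fun r : ℝ => r⁻¹) ⁻¹' sᶜ ⊆
        (fun r : ℝ => r⁻¹) '' (sᶜ ∩ Ioi 0) := fun r hr =>
      ⟨r⁻¹, ⟨hr.2, mem_Ioi.2 (inv_pos.2 (mem_Ioi.1 hr.1))⟩, inv_inv r⟩
    refine measure_mono_null hsub ?_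
    refine addHaar_image_eq_zero_of_differentiableOn_of_addHaar_eq_zero volume ?_
      (measure_mono_null inter_subset_left hsc)
    exact fun r hr => (differentiableAt_inv (ne_of_gt hr.2)).differentiableWithinAt
  · filter_upwards [hγ.ae_pos, measure_eq_zero_iff_ae_notMem.1 hs0] with t ht hts
    exact ⟨inv_pos.2 ht, by simpa using hts⟩

/-- Almost surely `φ(X₁) + ⋯ + φ(X_d) = S₁/T + ⋯ + S_d/T = 1/T`, because `S` lies on the simplex. -/
lemma ae_mixVec (hm : m ≠ 0) (hγ : IsFullMixing γ) :
    ∀ᵐ p ∂mixLaw m γ, (∀ i, mixVec m (williamson (m + 1) γ) p i ∈ Ioc (0 : ℝ) 1) ∧ 0 < p.1 ∧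
      ∑ i, pseudoInv (williamson (m + 1) γ) (mixVec m (williamson (m + 1) γ) p i) =
        ENNReal.ofReal p.1⁻¹ := by
  have hd : 2 ≤ m + 1 := by omega
  filter_upwards [ae_mixLaw hγ] with p hp
  have hq : ∀ i, 0 ≤ simplexPoint p.2 i / p.1 := fun i =>
    div_nonneg (simplexPoint_nonneg hp.2 i) hp.1.le
  refine ⟨fun i => ⟨williamson_pos hd hγ (hq i), williamson_le_one hd hγ (hq i)⟩, hp.1, ?_⟩
  simp only [mixVec]
  rw [Finset.sum_congr rfl fun i _ => pseudoInv_williamson hd hγ (hq i),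
    ← ENNReal.ofReal_sum_of_nonneg fun i _ => hq i, ← Finset.sum_div, sum_simplexPoint, one_div]

/-- The law of `ψ(1/T)` for `T ∼ γ`, where `ψ` is the Williamson transform of `γ`. -/
def kendallLaw (d : ℕ) (γ : Measure ℝ) : Measure ℝ := γ.map fun t => williamson d γ t⁻¹

lemma measurable_kendall (d : ℕ) : Measurable fun t : ℝ => williamson d γ t⁻¹ :=
  (williamson_measurable d γ).comp measurable_inv

instance (d : ℕ) : IsProbabilityMeasure (kendallLaw d γ) :=
  Measure.isProbabilityMeasure_map (measurable_kendall d).aemeasurable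

/-- Since `φ(X₁) + ⋯ + φ(X_d) = 1/T`, the law of `C_ψ(X)` is that of `ψ(1/T)`. -/
lemma copula_law (hm : m ≠ 0) (hγ : IsFullMixing γ) {B : Set ℝ} (hB : MeasurableSet B) :
    (mixLaw m γ).map (mixVec m (williamson (m + 1) γ)) {x | (∀ i, x i ∈ Icc (0 : ℝ) 1) ∧
      archCopula (m + 1) (williamson (m + 1) γ) x ∈ B} = kendallLaw (m + 1) γ B := by
  have hd : 2 ≤ m + 1 := by omega
  have hfst : MeasurePreserving (Prod.fst : ℝ × (Fin m → ℝ) → ℝ) (mixLaw m γ) γ :=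
    measurePreserving_fst
  rw [Measure.map_apply (measurable_mixVec _) (measurableSet_copula hd hγ hB), kendallLaw,
    Measure.map_apply (measurable_kendall _) hB,
    ← hfst.measure_preimage (measurable_kendall _ hB).nullMeasurableSet]
  refine measure_congr ?_
  filter_upwards [ae_mixVec hm hγ] with p hp
  refine propext ?_
  change ((∀ i, mixVec m (williamson (m + 1) γ) p i ∈ Icc (0 : ℝ) 1) ∧
    archCopula (m + 1) (williamson (m + 1) γ) (mixVec m (williamson (m + 1) γ) p) ∈ B) ↔
    williamson (m + 1) γ p.1⁻¹ ∈ B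
  rw [archCopula, hp.2.2, psiExt_ofReal _ (inv_pos.2 hp.2.1).le]
  exact and_iff_right fun i => ⟨(hp.1 i).1.le, (hp.1 i).2⟩

lemma kendallLaw_singular {d : ℕ} (hγ : IsFullMixing γ) (hs : γ ⟂ₘ volume) :
    kendallLaw d γ ⟂ₘ volume := by
  obtain ⟨M, -, hM0, hMpos, hMae⟩ := exists_null_inv_carrier hγ hs
  have hK := volume_image_williamson d hγ hM0 hMpos
  have hKm := measurableSet_toMeasurable volume (williamson d γ '' M)
  refine Measure.MutuallySingular.mk (s := (toMeasurable volume (williamson d γ '' M))ᶜ)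
    (t := toMeasurable volume (williamson d γ '' M)) ?_ (by rw [measure_toMeasurable, hK])
    (compl_union_self _).ge
  rw [kendallLaw, Measure.map_apply (measurable_kendall d) hKm.compl]
  refine measure_eq_zero_iff_ae_notMem.2 ?_
  filter_upwards [hMae] with t ht h
  exact h (subset_toMeasurable _ _ ⟨_, ht, rfl⟩)

lemma kendallLaw_singleton {d : ℕ} (hd : 2 ≤ d) (hγ : IsFullMixing γ)
    (hat : ∀ x : ℝ, γ {x} = 0) (y : ℝ) : kendallLaw d γ {y} = 0 := by
  rw [kendallLaw, Measure.map_apply (measurable_kendall d) (measurableSet_singleton y)]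
  have h1 : γ (Ioi 0 ∩ (fun t => williamson d γ t⁻¹) ⁻¹' {y}) = 0 := by
    have hsub : (Ioi 0 ∩ (fun t => williamson d γ t⁻¹) ⁻¹' {y}).Subsingleton := by
      intro s hs t ht
      refine inv_injective ((williamson_strictAntiOn hd hγ).injOn (mem_Ici.2 (inv_pos.2 hs.1).le)
        (mem_Ici.2 (inv_pos.2 ht.1).le) ?_)
      exact hs.2.trans (Eq.symm ht.2)
    rcases hsub.eq_empty_or_singleton with h | ⟨x, h⟩
    · rw [h, measure_empty]
    · rw [h]; exact hat x
  refine measure_eq_zero_iff_ae_notMem.2 ?_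
  filter_upwards [hγ.ae_pos, measure_eq_zero_iff_ae_notMem.1 h1] with t ht h2 h3
  exact h2 ⟨ht, h3⟩

lemma kendallLaw_Ioc_pos {d : ℕ} (hd : 2 ≤ d) (hγ : IsFullMixing γ) {a b : ℝ} (ha : 0 ≤ a)
    (hab : a < b) (hb : b ≤ 1) : 0 < kendallLaw d γ (Ioc a b) := by
  rw [kendallLaw, Measure.map_apply (measurable_kendall d) measurableSet_Ioc]
  have hcont : ContinuousOn (fun t => williamson d γ t⁻¹) (Ioi 0) :=
    (williamson_continuousOn d hγ).comp (continuousOn_inv₀.mono fun t ht => ne_of_gt ht)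
      fun t ht => mem_Ici.2 (inv_pos.2 ht).le
  have hopen : IsOpen (Ioi 0 ∩ (fun t => williamson d γ t⁻¹) ⁻¹' Ioo a b) :=
    hcont.isOpen_inter_preimage isOpen_Ioi isOpen_Ioo
  obtain ⟨z, hz, hzy⟩ := williamson_pos_surj hd hγ (y := (a + b) / 2)
    ⟨by linarith, by linarith⟩
  refine (hγ.open_pos _ hopen ⟨z⁻¹, ⟨inv_pos.2 hz, ?_⟩, (inv_pos.2 hz).le⟩).trans_le
    (measure_mono fun t ht => ⟨ht.2.1, ht.2.2.le⟩)
  rw [mem_preimage, inv_inv, hzy]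
  exact ⟨by linarith, by linarith⟩

lemma kendallDF_eq_cdf (hm : m ≠ 0) (hγ : IsFullMixing γ) :
    kendallDF (m + 1) (williamson (m + 1) γ)
      ((mixLaw m γ).map (mixVec m (williamson (m + 1) γ))) =
      ProbabilityTheory.cdf (kendallLaw (m + 1) γ) := by
  funext t
  rw [ProbabilityTheory.cdf_eq_real, measureReal_def, ← copula_law hm hγ measurableSet_Iic]
  rfl

/-- An atomless singular probability measure charging every interval in `[0,1]` has a continuous,
strictly increasing and singular distribution function. -/
lemma cdf_properties {κ : Measure ℝ} [IsProbabilityMeasure κ] (hat : ∀ x, κ {x} = 0)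
    (hpos : ∀ a b : ℝ, 0 ≤ a → a < b → b ≤ 1 → 0 < κ (Ioc a b)) (hs : κ ⟂ₘ volume) :
    ContinuousOn (ProbabilityTheory.cdf κ) (Icc 0 1) ∧
      StrictMonoOn (ProbabilityTheory.cdf κ) (Icc 0 1) ∧
      ∀ᵐ t ∂(volume.restrict (Icc (0 : ℝ) 1)), HasDerivAt (ProbabilityTheory.cdf κ) 0 t := by
  have hm := ProbabilityTheory.measure_cdf κ
  refine ⟨fun x _ => ContinuousAt.continuousWithinAt ?_, fun a ha b hb hab => ?_, ?_⟩
  · rw [(ProbabilityTheory.cdf κ).mono.continuousAt_iff_leftLim_eq_rightLim,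
      (ProbabilityTheory.cdf κ).rightLim_eq]
    have h := (ProbabilityTheory.cdf κ).measure_singleton x
    rw [hm, hat x, eq_comm, ENNReal.ofReal_eq_zero] at h
    exact le_antisymm ((ProbabilityTheory.cdf κ).mono.leftLim_le le_rfl) (by linarith)
  · have h := hpos a b ha.1 hab hb.2
    rw [← hm, StieltjesFunction.measure_Ioc, ENNReal.ofReal_pos] at h
    linarith
  · refine ae_restrict_of_ae ?_
    have h0 : κ.rnDeriv volume =ᵐ[volume] 0 := (Measure.rnDeriv_eq_zero κ volume).2 hs
    filter_upwards [(ProbabilityTheory.cdf κ).ae_hasDerivAt, h0] with t h1 h2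
    rw [hm, h2] at h1
    simpa using h1

/-- For fixed `x₂, …, x_d`, the section of `{φ(x₁) + ⋯ + φ(x_d) ∈ M}` is the `ψ`-image of a
translate of the null set `M`, so this set is null by Fubini. -/
lemma volume_levelUnion (hm : m ≠ 0) (hγ : IsFullMixing γ) {M : Set ℝ} (hM : MeasurableSet M)
    (hM0 : volume M = 0) :
    volume {x : Fin (m + 1) → ℝ | (∀ i, x i ∈ Ioc (0 : ℝ) 1) ∧
      (∑ i, monoInv (williamson (m + 1) γ) (x i)).toReal ∈ M} = 0 := by
  have hd : 2 ≤ m + 1 := by omega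
  set ψ := williamson (m + 1) γ with hψ
  set F : Set (ℝ × (Fin m → ℝ)) := {q | q.1 ∈ Ioc (0 : ℝ) 1 ∧ (∀ i, q.2 i ∈ Ioc (0 : ℝ) 1) ∧
    (monoInv ψ q.1 + ∑ i, monoInv ψ (q.2 i)).toReal ∈ M} with hF
  have hFm : MeasurableSet F := by
    have hφ := measurable_monoInv ψ
    have : F = (Prod.fst ⁻¹' Ioc (0 : ℝ) 1) ∩ ((Prod.snd ⁻¹' univ.pi fun _ => Ioc (0 : ℝ) 1) ∩
        (fun q : ℝ × (Fin m → ℝ) =>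
          (monoInv ψ q.1 + ∑ i, monoInv ψ (q.2 i)).toReal) ⁻¹' M) := by
      ext q; simp [hF]
    rw [this]
    refine (measurable_fst measurableSet_Ioc).inter
      ((measurable_snd (MeasurableSet.univ_pi fun _ => measurableSet_Ioc)).inter ?_)
    refine (ENNReal.measurable_toReal.comp ((hφ.comp measurable_fst).add ?_)) hM
    exact Finset.measurable_sum _ fun i _ =>
      hφ.comp ((measurable_pi_apply i).comp measurable_snd)
  have hpre : {x : Fin (m + 1) → ℝ | (∀ i, x i ∈ Ioc (0 : ℝ) 1) ∧
      (∑ i, monoInv ψ (x i)).toReal ∈ M} ⊆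
      MeasurableEquiv.piFinSuccAbove (fun _ : Fin (m + 1) => ℝ) 0 ⁻¹' F := by
    rintro x ⟨hx, hxM⟩
    refine ⟨hx 0, fun i => hx i.succ, ?_⟩
    rw [Fin.sum_univ_succ] at hxM
    exact hxM
  refine measure_mono_null hpre ?_
  rw [(volume_preserving_piFinSuccAbove (fun _ : Fin (m + 1) => ℝ) 0).measure_preimage_equiv,
    Measure.volume_eq_prod, Measure.prod_apply_symm hFm, lintegral_eq_zero_iff
      (measurable_measure_prodMk_right hFm)]
  refine ae_of_all _ fun v => ?_
  by_cases hv : ∀ i, v i ∈ Ioc (0 : ℝ) 1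
  swap
  · refine measure_mono_null (t := ∅) (fun y hy => ?_) measure_empty
    exact hv hy.2.1
  choose z hz hzv using fun i => williamson_surj hd hγ (hv i)
  have hc : ∑ i, monoInv ψ (v i) = ENNReal.ofReal (∑ i, z i) := by
    rw [ENNReal.ofReal_sum_of_nonneg fun i _ => hz i]
    exact Finset.sum_congr rfl fun i _ => by rw [← hzv i, monoInv_williamson hd hγ (hz i)]
  have hsub : (fun y => (y, v)) ⁻¹' F ⊆
      {1} ∪ ψ '' (((fun u => u + ∑ i, z i) ⁻¹' M) ∩ Ioi 0) := by
    rintro y ⟨hy, -, hyM⟩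
    obtain ⟨u, hu, rfl⟩ := williamson_surj hd hγ hy
    rcases hu.eq_or_lt with rfl | hu0
    · exact Or.inl (williamson_zero _ _)
    · refine Or.inr ⟨u, ⟨?_, hu0⟩, rfl⟩
      simp only at hyM
      rw [hc, monoInv_williamson hd hγ hu,
        ← ENNReal.ofReal_add hu (Finset.sum_nonneg fun i _ => hz i),
        ENNReal.toReal_ofReal (add_nonneg hu (Finset.sum_nonneg fun i _ => hz i))] at hyM
      exact hyM
  refine measure_mono_null hsub (measure_union_null (measure_singleton _) ?_)
  refine volume_image_williamson _ hγ (measure_mono_null inter_subset_left ?_) inter_subset_right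
  rw [measure_preimage_add_right, hM0]

lemma mixVec_singular (hm : m ≠ 0) (hγ : IsFullMixing γ) (hs : γ ⟂ₘ volume) :
    (mixLaw m γ).map (mixVec m (williamson (m + 1) γ)) ⟂ₘ volume := by
  have hd : 2 ≤ m + 1 := by omega
  obtain ⟨M, hM, hM0, -, hMae⟩ := exists_null_inv_carrier hγ hs
  set E := {x : Fin (m + 1) → ℝ | (∀ i, x i ∈ Ioc (0 : ℝ) 1) ∧
      (∑ i, monoInv (williamson (m + 1) γ) (x i)).toReal ∈ M} with hE
  have hEm : MeasurableSet E := by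
    have : E = (univ.pi fun _ => Ioc (0 : ℝ) 1) ∩ (fun x : Fin (m + 1) → ℝ =>
        (∑ i, monoInv (williamson (m + 1) γ) (x i)).toReal) ⁻¹' M := by
      ext x; simp [hE]
    rw [this]
    refine (MeasurableSet.univ_pi fun _ => measurableSet_Ioc).inter
      ((ENNReal.measurable_toReal.comp ?_) hM)
    exact Finset.measurable_sum _ fun i _ =>
      (measurable_monoInv _).comp (measurable_pi_apply i)
  refine Measure.MutuallySingular.mk (s := Eᶜ) (t := E) ?_ (volume_levelUnion hm hγ hM hM0)
    (compl_union_self _).ge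
  rw [Measure.map_apply (measurable_mixVec _) hEm.compl]
  refine measure_eq_zero_iff_ae_notMem.2 ?_
  have hM' : ∀ᵐ p ∂mixLaw m γ, p.1⁻¹ ∈ M := Measure.quasiMeasurePreserving_fst.ae hMae
  filter_upwards [ae_mixVec hm hγ, hM'] with p hp hpM hmem
  refine hmem ⟨hp.1, ?_⟩
  rw [Finset.sum_congr rfl fun i _ => monoInv_eq_pseudoInv hd hγ (Ioc_subset_Icc_self (hp.1 i)),
    hp.2.2, ENNReal.toReal_ofReal (inv_pos.2 hp.2.1).le]
  exact hpM

/-- Every point of `(0,1)^d` is the image under the continuous map `(t,w) ↦ (ψ(Sᵢ/t))ᵢ` of a point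
in the interior of the support of the joint law. -/
lemma mixVec_pos (hm : m ≠ 0) (hγ : IsFullMixing γ) {U : Set (Fin (m + 1) → ℝ)} (hU : IsOpen U)
    (hne : (U ∩ univ.pi fun _ => Icc (0 : ℝ) 1).Nonempty) :
    0 < (mixLaw m γ).map (mixVec m (williamson (m + 1) γ)) U := by
  have hd : 2 ≤ m + 1 := by omega
  obtain ⟨x, hxU, hx⟩ : (U ∩ univ.pi fun _ => Ioo (0 : ℝ) 1).Nonempty := by
    obtain ⟨x, hxU, hx⟩ := hne
    refine mem_closure_iff.1 ?_ U hU hxU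
    rw [closure_pi_set]
    simpa [closure_Ioo (zero_ne_one (α := ℝ))] using hx
  choose z hz hzx using fun i => williamson_pos_surj hd hγ (hx i (mem_univ i))
  set c := ∑ i, z i with hc
  have hsplit : c = z 0 + ∑ i : Fin m, z i.succ := Fin.sum_univ_succ z
  have hc0 : 0 < c := Finset.sum_pos (fun i _ => hz i) Finset.univ_nonempty
  set w : Fin m → ℝ := fun j => z j.succ / c with hw
  have hwsum : ∑ j, w j = 1 - z 0 / c := by
    rw [hw, ← Finset.sum_div, eq_sub_iff_add_eq, ← add_div, add_comm, ← hsplit, div_self hc0.ne']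
  have hpt : ∀ i, simplexPoint w i = z i / c := by
    refine Fin.cases ?_ fun j => ?_
    · simp only [simplexPoint, Fin.cons_zero]; rw [hwsum]; ring
    · simp only [simplexPoint, Fin.cons_succ]; rfl
  have harg : ∀ i, simplexPoint w i / c⁻¹ = z i := fun i => by
    rw [hpt]; field_simp
  have hwopen : w ∈ openSimplex m :=
    ⟨fun j => div_pos (hz _) hc0, by rw [hwsum]; linarith [div_pos (hz 0) hc0]⟩
  have hcont : ContinuousAt (mixVec m (williamson (m + 1) γ)) (c⁻¹, w) := by
    refine continuousAt_pi.2 fun i => ?_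
    have h1 : ContinuousAt (fun p : ℝ × (Fin m → ℝ) => simplexPoint p.2 i / p.1) (c⁻¹, w) :=
      (((continuous_apply i).comp (continuous_simplexPoint.comp continuous_snd)).continuousAt).div
        continuousAt_fst (inv_pos.2 hc0).ne'
    refine ContinuousAt.comp (g := williamson (m + 1) γ) ?_ h1
    refine (williamson_continuousOn (m + 1) hγ).continuousAt (Ici_mem_nhds ?_)
    simp only
    rw [harg]
    exact hz i
  have himg : mixVec m (williamson (m + 1) γ) (c⁻¹, w) = x :=
    funext fun i => by simp only [mixVec]; rw [harg, hzx]
  have hnhds : mixVec m (williamson (m + 1) γ) ⁻¹' U ∈ 𝓝 (c⁻¹, w) :=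
    hcont (by rw [himg]; exact hU.mem_nhds hxU)
  obtain ⟨V₁, V₂, hV₁, hcV, hV₂, hwV, hsub⟩ := mem_nhds_prod_iff'.1 hnhds
  rw [Measure.map_apply (measurable_mixVec _) hU.measurableSet]
  refine lt_of_lt_of_le ?_ (measure_mono hsub)
  rw [mixLaw, Measure.prod_prod]
  exact ENNReal.mul_pos (hγ.open_pos V₁ hV₁ ⟨_, hcV, (inv_pos.2 hc0).le⟩).ne'
    (simplexMeasure_pos hV₂ ⟨w, hwV, hwopen⟩).ne'

end conclusions

/-- There exists `γ ∈ P_{W_d}` which is singular w.r.t. Lebesgue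
measure, atomless, and has full topological support `[0,∞)`. For any such `γ`, the
generator `ψ = W_d γ` is strict and the measure `μ_C` of `C = C_ψ` satisfies:
(1) `μ_C` is singular w.r.t. `λ_d` and has full support `[0,1]^d`;
(2) `μ_C(L_t) = 0` for every `t ∈ [0,1]`;
(3) the Kendall distribution function is continuous, strictly increasing on `[0,1]`,
and has derivative `0` at Lebesgue-almost every `t ∈ [0,1]`. -/
theorem exists_singular_archimedean_with_full_support (d : ℕ) (hd : 3 ≤ d) :
    (∃ γ : Measure ℝ, memPW d γ ∧ γ ⟂ₘ volume ∧ (∀ x : ℝ, γ {x} = 0) ∧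
      (∀ U : Set ℝ, IsOpen U → (U ∩ Ici 0).Nonempty → 0 < γ U)) ∧
    (∀ γ : Measure ℝ, memPW d γ → γ ⟂ₘ volume → (∀ x : ℝ, γ {x} = 0) →
      (∀ U : Set ℝ, IsOpen U → (U ∩ Ici 0).Nonempty → 0 < γ U) →
      IsStrictGenerator (williamson d γ) ∧
      ∀ μ : Measure (Fin d → ℝ), IsProbabilityMeasure μ →
        (∀ x : Fin d → ℝ, (∀ i, x i ∈ Icc (0 : ℝ) 1) →
          μ (Set.univ.pi fun i => Icc 0 (x i)) =
            ENNReal.ofReal (archCopula d (williamson d γ) x)) →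
        (μ ⟂ₘ volume ∧
          (∀ U : Set (Fin d → ℝ), IsOpen U →
            (U ∩ Set.univ.pi fun _ => Icc (0 : ℝ) 1).Nonempty → 0 < μ U)) ∧
        (∀ t ∈ Icc (0 : ℝ) 1, μ (levelSet d (williamson d γ) t) = 0) ∧
        (ContinuousOn (kendallDF d (williamson d γ) μ) (Icc 0 1) ∧
          StrictMonoOn (kendallDF d (williamson d γ) μ) (Icc 0 1) ∧
          ∀ᵐ t ∂(volume.restrict (Icc (0 : ℝ) 1)),
            HasDerivAt (kendallDF d (williamson d γ) μ) 0 t)) := by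
  refine ⟨exists_memPW (by omega), fun γ hPW hsing hat hsupp => ?_⟩
  obtain ⟨m, rfl⟩ : ∃ m, d = m + 1 := ⟨d - 1, by omega⟩
  have hm : m ≠ 0 := by omega
  have hd' : 2 ≤ m + 1 := by omega
  obtain ⟨hprob, hneg, hzero, -⟩ := hPW
  have hγ : IsFullMixing γ := by
    refine ⟨?_, hsupp⟩
    filter_upwards [measure_eq_zero_iff_ae_notMem.1 hneg,
      measure_eq_zero_iff_ae_notMem.1 hzero] with t h1 h2
    exact lt_of_le_of_ne (not_lt.1 h1) fun h => h2 h.symm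
  refine ⟨fun z hz => williamson_pos hd' hγ hz, fun μ hμ hbox => ?_⟩
  have hν : IsProbabilityMeasure ((mixLaw m γ).map (mixVec m (williamson (m + 1) γ))) :=
    Measure.isProbabilityMeasure_map (measurable_mixVec _).aemeasurable
  have hone : μ (univ.pi fun _ => Icc (0 : ℝ) 1) = 1 := by
    have h1 : pseudoInv (williamson (m + 1) γ) 1 = 0 := by
      have := pseudoInv_williamson hd' hγ (le_refl (0 : ℝ))
      rwa [williamson_zero, ENNReal.ofReal_zero] at this
    rw [hbox (fun _ => 1) fun _ => ⟨zero_le_one, le_rfl⟩, archCopula]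
    simp [h1, psiExt, williamson_zero]
  obtain rfl : μ = (mixLaw m γ).map (mixVec m (williamson (m + 1) γ)) :=
    ext_of_unit_boxes hone fun x hx => by rw [hbox x hx, mixVec_box hm hγ hx]
  refine ⟨⟨mixVec_singular hm hγ hsing, fun U hU hne => mixVec_pos hm hγ hU hne⟩,
    fun t _ => ?_, ?_⟩
  · have h := copula_law hm hγ (measurableSet_singleton t)
    rw [kendallLaw_singleton hd' hγ hat] at h
    exact h
  · rw [kendallDF_eq_cdf hm hγ]
    exact cdf_properties (kendallLaw_singleton hd' hγ hat)
      (fun a b ha hab hb => kendallLaw_Ioc_pos hd' hγ ha hab hb) (kendallLaw_singular hγ hsing)
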